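/- Let E₁, …, E_m be Banach spaces and F a normed space. If P : E₁ × ⋯ × E_m → F is an (n₁, …, n_m)-homogeneous polynomial that is separately continuous (continuous in each variable with the others fixed), then P is continuous. -/

import Mathlib

/-- `P : E₁ × ⋯ × E_m → F` is an `(n₁, …, n_m)`-homogeneous polynomial
(multipolynomial): separately, in each variable `i`, it is an `n i`-homogeneous
polynomial, i.e. the diagonal of some `n i`-linear map. -/
def IsMultiPoly {m : ℕ} {E : Fin m → Type*} [∀ i, NormedAddCommGroup (E i)]
    [∀ i, NormedSpace ℝ (E i)] {F : Type*} [NormedAddCommGroup F] [NormedSpace ℝ F]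
    (n : Fin m → ℕ) (P : (∀ i, E i) → F) : Prop :=
  ∀ (i : Fin m) (x : ∀ i, E i), ∃ A : MultilinearMap ℝ (fun _ : Fin (n i) => E i) F,
    ∀ y : E i, P (Function.update x i y) = A (fun _ => y)

/-
A polynomial of degree at most `d` along a line is determined by its values at `d + 1` nodes
through Lagrange's formula, whose weights do not depend on the polynomial. Placing the nodes close
to `0` transports a common bound for a family of polynomials from a neighbourhood of one point to
a neighbourhood of any other; letting the evaluation parameter tend to `0` turns such a bound into
equicontinuity. Baire's theorem supplies the first bound, so a function of two variables which is
separately continuous, and polynomial of bounded degree in a variable running over a Baire space,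
is jointly continuous. The theorem follows by adding the variables one at a time.
-/

open Filter Topology

section Algebra

/-- A function is polynomial on lines, of degree at most `d`, if its restriction to each
parametrized line `t ↦ a + t • b` is a polynomial in `t` of degree at most `d` with vector
coefficients; only the values of `c` at `k ≤ d` matter. The bound `d` is uniform over all lines.
Diagonals of multilinear maps enter the continuity theorem only through this property. -/
def IsPolynomialOnLines (R : Type*) {Y F : Type*} [Semiring R] [AddCommMonoid Y] [Module R Y]
    [AddCommMonoid F] [Module R F] (d : ℕ) (f : Y → F) : Prop :=
  ∀ a b : Y, ∃ c : ℕ → F, ∀ t : R, f (a + t • b) = ∑ k ∈ Finset.range (d + 1), t ^ k • c k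

theorem isPolynomialOnLines_multilinearMap_diag {R ι Y F : Type*} [CommSemiring R] [Fintype ι]
    [AddCommMonoid Y] [Module R Y] [AddCommMonoid F] [Module R F]
    (A : MultilinearMap R (fun _ : ι => Y) F) :
    IsPolynomialOnLines R (Fintype.card ι) fun y => A fun _ => y := by
  classical
  intro a b
  refine ⟨fun k => ∑ s ∈ Finset.powersetCard k Finset.univ, A (s.piecewise (fun _ => b) fun _ => a),
    fun t => ?_⟩
  have map_piecewise (s : Finset ι) : A (s.piecewise (fun _ => t • b) fun _ => a) =
      t ^ s.card • A (s.piecewise (fun _ => b) fun _ => a) := by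
    rw [← Finset.prod_const, ← A.map_piecewise_smul]
    congr 1
    ext i
    by_cases hi : i ∈ s <;> simp [hi]
  calc A (fun _ => a + t • b)
      = A ((fun _ => t • b) + fun _ => a) := by simp only [add_comm a]; rfl
    _ = ∑ s ∈ Finset.univ.powerset, t ^ s.card • A (s.piecewise (fun _ => b) fun _ => a) := by
        simp only [A.map_add_univ, map_piecewise, Finset.powerset_univ]
    _ = ∑ k ∈ Finset.range (Fintype.card ι + 1), t ^ k •
          ∑ s ∈ Finset.powersetCard k Finset.univ, A (s.piecewise (fun _ => b) fun _ => a) := by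
        rw [Finset.sum_powerset, Finset.card_univ]
        refine Finset.sum_congr rfl fun k _ => ?_
        rw [Finset.smul_sum]
        exact Finset.sum_congr rfl fun s hs => by rw [(Finset.mem_powersetCard.1 hs).2]

theorem IsMultiPoly.isPolynomialOnLines {m : ℕ} {E : Fin m → Type*}
    [∀ i, NormedAddCommGroup (E i)] [∀ i, NormedSpace ℝ (E i)] {F : Type*} [NormedAddCommGroup F]
    [NormedSpace ℝ F] {n : Fin m → ℕ} {P : (∀ i, E i) → F} (hP : IsMultiPoly n P) (i : Fin m)
    (x : ∀ i, E i) : IsPolynomialOnLines ℝ (n i) fun y => P (Function.update x i y) := by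
  obtain ⟨A, hA⟩ := hP i x
  simpa only [hA, Fintype.card_fin] using isPolynomialOnLines_multilinearMap_diag A

theorem pow_eq_sum_lagrangeBasis {K : Type*} [Field K] [DecidableEq K] {s : Finset K} {k : ℕ}
    (hk : k < s.card) (t : K) :
    t ^ k = ∑ v ∈ s, (Lagrange.basis s id v).eval t * v ^ k := by
  have hdeg : (Polynomial.X ^ k : Polynomial K).degree < s.card := by
    simpa only [Polynomial.degree_X_pow, Nat.cast_lt] using hk
  have h := congrArg (Polynomial.eval t)
    (Lagrange.eq_interpolate (v := id) Function.injective_id.injOn hdeg)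
  simpa [Lagrange.interpolate_apply, Polynomial.eval_finsetSum, mul_comm] using h

theorem IsPolynomialOnLines.eq_sum_lagrangeBasis {K Y F : Type*} [Field K] [DecidableEq K]
    [AddCommMonoid Y] [Module K Y] [AddCommMonoid F] [Module K F] {d : ℕ} {f : Y → F}
    (hf : IsPolynomialOnLines K d f) {s : Finset K} (hs : d < s.card) (a b : Y) (t : K) :
    f (a + t • b) = ∑ v ∈ s, (Lagrange.basis s id v).eval t • f (a + v • b) := by
  obtain ⟨c, hc⟩ := hf a b
  simp only [hc, Finset.smul_sum, smul_smul]
  rw [Finset.sum_comm]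
  refine Finset.sum_congr rfl fun k hk => ?_
  rw [← Finset.sum_smul, ← pow_eq_sum_lagrangeBasis ((Finset.mem_range_succ_iff.1 hk).trans_lt hs)]

end Algebra

theorem IsPolynomialOnLines.norm_sub_le_sum_lagrangeBasis {𝕜 Y F : Type*} [NormedField 𝕜]
    [DecidableEq 𝕜] [AddCommMonoid Y] [Module 𝕜 Y] [SeminormedAddCommGroup F] [NormedSpace 𝕜 F]
    {d : ℕ} {f : Y → F} (hf : IsPolynomialOnLines 𝕜 d f) {s : Finset 𝕜} (hs : d < s.card)
    {a b : Y} {M : ℝ} (hM : ∀ v ∈ s, ‖f (a + v • b)‖ ≤ M) (t : 𝕜) :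
    ‖f (a + t • b) - f a‖ ≤
      ∑ v ∈ s, ‖(Lagrange.basis s id v).eval t - (Lagrange.basis s id v).eval 0‖ * M := by
  have h₀ := hf.eq_sum_lagrangeBasis hs a b 0
  rw [zero_smul, add_zero] at h₀
  rw [h₀, hf.eq_sum_lagrangeBasis hs a b t, ← Finset.sum_sub_distrib]
  refine norm_sum_le_of_le s fun v hv => ?_
  rw [← sub_smul, norm_smul]
  exact mul_le_mul_of_nonneg_left (hM v hv) (norm_nonneg _)

theorem exists_isBoundedUnder_prod_nhds {α Y : Type*} {l : Filter α} [l.IsCountablyGenerated]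
    [TopologicalSpace Y] [BaireSpace Y] [Nonempty Y] {g : α → Y → ℝ}
    (hg : ∀ a, LowerSemicontinuous (g a))
    (hbdd : ∀ y, l.IsBoundedUnder (· ≤ ·) fun a => g a y) :
    ∃ y, (l ×ˢ 𝓝 y).IsBoundedUnder (· ≤ ·) fun p => g p.1 p.2 := by
  obtain ⟨U, hU⟩ := l.exists_antitone_basis
  have hclosed (k : ℕ) : IsClosed {y | ∀ a ∈ U k, g a y ≤ k} := by
    simp only [Set.ofPred_forall]
    exact isClosed_biInter fun a _ => (hg a).isClosed_preimage k
  have hcover : ⋃ k : ℕ, {y | ∀ a ∈ U k, g a y ≤ k} = Set.univ := by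
    refine Set.eq_univ_of_forall fun y => Set.mem_iUnion.2 ?_
    obtain ⟨M, hM⟩ := hbdd y
    obtain ⟨i, -, hi⟩ := hU.toHasBasis.mem_iff.1 (eventually_map.1 hM)
    obtain ⟨j, hj⟩ := exists_nat_ge M
    refine ⟨max i j, fun a ha => ?_⟩
    calc g a y ≤ M := hi (hU.antitone (le_max_left i j) ha)
      _ ≤ j := hj
      _ ≤ (max i j : ℕ) := by exact_mod_cast le_max_right i j
  obtain ⟨k, y, hy⟩ := nonempty_interior_of_iUnion_of_closed hclosed hcover
  refine ⟨y, k, eventually_map.2 ?_⟩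
  filter_upwards [prod_mem_prod (hU.mem k) (mem_interior_iff_mem_nhds.1 hy)] with p hp
  exact hp.2 p.1 hp.1

section TopologicalVectorSpace

variable {𝕜 Y F : Type*} [NontriviallyNormedField 𝕜] [AddCommGroup Y] [Module 𝕜 Y]
  [TopologicalSpace Y] [IsTopologicalAddGroup Y] [ContinuousSMul 𝕜 Y]
  [SeminormedAddCommGroup F] [NormedSpace 𝕜 F]

namespace IsPolynomialOnLines

variable {α : Type*} {l : Filter α} {d : ℕ} {f : α → Y → F}

theorem isBoundedUnder_prod_nhds (hf : ∀ a, IsPolynomialOnLines 𝕜 d (f a)) {y₁ : Y}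
    (hbdd : (l ×ˢ 𝓝 y₁).IsBoundedUnder (· ≤ ·) fun p => ‖f p.1 p.2‖) (y₀ : Y) :
    (l ×ˢ 𝓝 y₀).IsBoundedUnder (· ≤ ·) fun p => ‖f p.1 p.2‖ := by
  classical
  obtain ⟨M, hM⟩ := hbdd
  have hline : Tendsto (fun q : 𝕜 × α × Y => (q.2.1, y₁ + q.1 • (q.2.2 - y₁)))
      (𝓝 0 ×ˢ (l ×ˢ 𝓝 y₀)) (l ×ˢ 𝓝 y₁) := by
    have hy : Tendsto (fun q : 𝕜 × α × Y => q.2.2) (𝓝 0 ×ˢ (l ×ˢ 𝓝 y₀)) (𝓝 y₀) :=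
      tendsto_snd.comp tendsto_snd
    refine (tendsto_fst.comp tendsto_snd).prodMk ?_
    simpa using (tendsto_fst.smul (hy.sub_const y₁)).const_add y₁
  have hnear : ∀ᶠ v in 𝓝 (0 : 𝕜), ∀ᶠ p in l ×ˢ 𝓝 y₀, ‖f p.1 (y₁ + v • (p.2 - y₁))‖ ≤ M :=
    (hline.eventually (eventually_map.1 hM)).curry
  obtain ⟨s, hsM, hs⟩ := (infinite_of_mem_nhds 0 hnear).exists_subset_card_eq (d + 1)
  refine ⟨∑ v ∈ s, ‖(Lagrange.basis s id v).eval 1‖ * M, eventually_map.2 ?_⟩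
  filter_upwards [(Finset.eventually_all s).2 fun v hv => hsM hv] with p hp
  have hsum := (hf p.1).eq_sum_lagrangeBasis (s := s) (by lia) y₁ (p.2 - y₁) 1
  rw [one_smul, add_sub_cancel] at hsum
  rw [hsum]
  refine norm_sum_le_of_le s fun v hv => ?_
  rw [norm_smul]
  exact mul_le_mul_of_nonneg_left (hp v hv) (norm_nonneg _)

theorem tendsto_sub_of_isBoundedUnder (hf : ∀ a, IsPolynomialOnLines 𝕜 d (f a)) {y₀ : Y}
    (hbdd : (l ×ˢ 𝓝 y₀).IsBoundedUnder (· ≤ ·) fun p => ‖f p.1 p.2‖) :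
    Tendsto (fun p => f p.1 p.2 - f p.1 y₀) (l ×ˢ 𝓝 y₀) (𝓝 0) := by
  classical
  obtain ⟨M, hM⟩ := hbdd
  obtain ⟨s, -, hs⟩ := (Set.infinite_univ (α := 𝕜)).exists_subset_card_eq (d + 1)
  let K (t : 𝕜) : ℝ :=
    ∑ v ∈ s, ‖(Lagrange.basis s id v).eval t - (Lagrange.basis s id v).eval 0‖ * M
  have hK : Tendsto K (𝓝[≠] 0) (𝓝 0) := by
    have hcont : Continuous K := by fun_prop
    simpa [K] using hcont.continuousWithinAt.tendsto (x := 0) (s := {0}ᶜ)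
  rw [NormedAddGroup.tendsto_nhds_zero]
  intro ε hε
  obtain ⟨t, htε, ht⟩ := ((hK.eventually_lt_const hε).and self_mem_nhdsWithin).exists
  have hline (v : 𝕜) : Tendsto (fun p : α × Y => (p.1, y₀ + v • t⁻¹ • (p.2 - y₀)))
      (l ×ˢ 𝓝 y₀) (l ×ˢ 𝓝 y₀) := by
    refine tendsto_fst.prodMk ?_
    have hy : Tendsto (fun p : α × Y => p.2) (l ×ˢ 𝓝 y₀) (𝓝 y₀) := tendsto_snd
    simpa using (((hy.sub_const y₀).const_smul t⁻¹).const_smul v).const_add y₀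
  filter_upwards [(Finset.eventually_all s).2 fun v _ =>
    (hline v).eventually (eventually_map.1 hM)] with p hp
  have hle := (hf p.1).norm_sub_le_sum_lagrangeBasis (by lia) hp t
  rw [smul_inv_smul₀ ht, add_sub_cancel] at hle
  exact hle.trans_lt htε

end IsPolynomialOnLines

theorem continuousAt_uncurry_of_isPolynomialOnLines {X : Type*} [TopologicalSpace X] [BaireSpace Y]
    {Q : X → Y → F} {x₀ : X} [(𝓝 x₀).IsCountablyGenerated] {d : ℕ}
    (hX : ∀ y, ContinuousAt (fun x => Q x y) x₀) (hY : ∀ x, Continuous (Q x))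
    (hQ : ∀ x, IsPolynomialOnLines 𝕜 d (Q x)) (y₀ : Y) :
    ContinuousAt (Function.uncurry Q) (x₀, y₀) := by
  obtain ⟨y₁, hy₁⟩ := exists_isBoundedUnder_prod_nhds (fun x => (hY x).norm.lowerSemicontinuous)
    fun y => (hX y).norm.isBoundedUnder_le
  have hdiff := IsPolynomialOnLines.tendsto_sub_of_isBoundedUnder hQ
    (IsPolynomialOnLines.isBoundedUnder_prod_nhds hQ hy₁ y₀)
  have hfst : Tendsto (fun p : X × Y => Q p.1 y₀) (𝓝 x₀ ×ˢ 𝓝 y₀) (𝓝 (Q x₀ y₀)) :=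
    (hX y₀).tendsto.comp tendsto_fst
  rw [ContinuousAt, nhds_prod_eq]
  simpa [Function.uncurry_def] using hdiff.add hfst

end TopologicalVectorSpace

theorem continuous_piecewise_of_subsingleton {ι F : Type*} {E : ι → Type*} [DecidableEq ι]
    [∀ i, TopologicalSpace (E i)] [TopologicalSpace F] {P : (∀ i, E i) → F}
    (hsep : ∀ i x, Continuous fun y => P (Function.update x i y)) {S : Finset ι}
    (hS : (S : Set ι).Subsingleton) (z : ∀ i, E i) : Continuous fun x => P (S.piecewise x z) := by
  obtain hS | ⟨i, hi⟩ := hS.eq_empty_or_singleton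
  · obtain rfl := Finset.coe_eq_empty.1 hS
    simpa only [Finset.piecewise_empty] using (continuous_const : Continuous fun _ => P z)
  · obtain rfl := Finset.coe_eq_singleton.1 hi
    simpa only [Finset.piecewise_singleton] using! (hsep i z).comp (continuous_apply i)

theorem continuous_piecewise_insert {𝕜 ι F : Type*} {E : ι → Type*} [NontriviallyNormedField 𝕜]
    [Countable ι] [DecidableEq ι] [∀ j, TopologicalSpace (E j)]
    [∀ j, FirstCountableTopology (E j)] {i : ι} [AddCommGroup (E i)] [Module 𝕜 (E i)]
    [IsTopologicalAddGroup (E i)] [ContinuousSMul 𝕜 (E i)] [BaireSpace (E i)]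
    [SeminormedAddCommGroup F] [NormedSpace 𝕜 F] {P : (∀ j, E j) → F} {d : ℕ}
    (hP : ∀ x, IsPolynomialOnLines 𝕜 d fun y => P (Function.update x i y))
    (hsep : ∀ x, Continuous fun y => P (Function.update x i y))
    {S : Finset ι} (hi : i ∉ S) (hS : ∀ z, Continuous fun x => P (S.piecewise x z))
    (z : ∀ j, E j) : Continuous fun x => P ((insert i S).piecewise x z) := by
  let Q (x : ∀ j, E j) (y : E i) : F := P (Function.update (S.piecewise x z) i y)
  have hQx (y : E i) : Continuous fun x => Q x y := by
    simpa only [Q, Finset.update_piecewise_of_notMem S _ z hi] using hS (Function.update z i y)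
  have hQ : Continuous (Function.uncurry Q) := continuous_iff_continuousAt.2 fun p =>
    continuousAt_uncurry_of_isPolynomialOnLines (fun y => (hQx y).continuousAt)
      (fun x => hsep _) (fun x => hP _) p.2
  simpa only [Finset.piecewise_insert] using! hQ.comp (continuous_id.prodMk (continuous_apply i))

theorem stmt13_general {𝕜 ι F : Type*} {E : ι → Type*} [NontriviallyNormedField 𝕜] [Finite ι]
    [DecidableEq ι] [∀ i, AddCommGroup (E i)] [∀ i, Module 𝕜 (E i)] [∀ i, TopologicalSpace (E i)]
    [∀ i, IsTopologicalAddGroup (E i)] [∀ i, ContinuousSMul 𝕜 (E i)]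
    [∀ i, FirstCountableTopology (E i)] (hE : {i | ¬BaireSpace (E i)}.Subsingleton)
    [SeminormedAddCommGroup F] [NormedSpace 𝕜 F] (d : ι → ℕ) {P : (∀ i, E i) → F}
    (hP : ∀ i x, IsPolynomialOnLines 𝕜 (d i) fun y => P (Function.update x i y))
    (hsep : ∀ i x, Continuous fun y => P (Function.update x i y)) : Continuous P := by
  classical
  have := Fintype.ofFinite ι
  let B : Finset ι := {i | ¬BaireSpace (E i)}
  have hB : (B : Set ι).Subsingleton := by simpa [B] using hE
  have key (S : Finset ι) (z : ∀ i, E i) : Continuous fun x => P ((S ∪ B).piecewise x z) := by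
    induction S using Finset.induction_on generalizing z with
    | empty =>
      rw [Finset.empty_union]
      exact continuous_piecewise_of_subsingleton hsep hB z
    | insert i S _ ih =>
      rw [Finset.insert_union]
      by_cases hi : i ∈ S ∪ B
      · rw [Finset.insert_eq_of_mem hi]
        exact ih z
      · have : BaireSpace (E i) := by simp_all [B]
        exact continuous_piecewise_insert (hP i) (hsep i) hi ih z
  have huniv := key Finset.univ 0
  rw [Finset.union_eq_left.2 (Finset.subset_univ B)] at huniv
  simpa only [Finset.piecewise_univ] using huniv

/-- For multipolynomials between Banach spaces, separate continuity implies
continuity. -/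
theorem stmt13 {m : ℕ} {E : Fin m → Type*} [∀ i, NormedAddCommGroup (E i)]
    [∀ i, NormedSpace ℝ (E i)] [∀ i, CompleteSpace (E i)]
    {F : Type*} [NormedAddCommGroup F] [NormedSpace ℝ F]
    (n : Fin m → ℕ) (P : (∀ i, E i) → F) (hP : IsMultiPoly n P)
    (hsep : ∀ (i : Fin m) (x : ∀ i, E i),
      Continuous fun y : E i => P (Function.update x i y)) :
    Continuous P :=
  stmt13_general (fun _ hi => (hi inferInstance).elim) n hP.isPolynomialOnLines hsep
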